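/- arXiv:2409.09630 — 6 statements merged into one kernel-verified Lean document; each statement's English description precedes it below -/
import Mathlib

section
/- Let m ≥ 2 be an integer and let l be a real number with 0 < l < 2m − 1. Then there exists an integer t ≥ 2 such that for every integer r ≥ 1, the number of t-aperiodic reduced words of length r over the alphabet {x_1^{±1},…,x_m^{±1}} is at least l^r. -/
/-!
Let `f r` be the number of `t`-aperiodic reduced words of length `r`, where `t = T + 1`. The proof
is the power-counting argument showing `l * f r ≤ f (r + 1)` for `T` large, by strong induction
on `r`.

A good word `w` of length `r` has at least `2m - 1` reduced extensions `a :: w`. If such an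
extension is not aperiodic, it begins with `Y ^ (T + 1)` for some `Y` of length `n ≥ 1`, as `w`
itself contains no such power. Deleting the first `T` copies of `Y` leaves a good word `u` of length
`r + 1 - T * n`, which begins with `Y` and hence, together with `n`, determines `a :: w`. So at most
`f (r + 1 - T * n)` extensions are lost for each `n` (`card_step`). By the induction hypothesis this
is at most `l * q ^ n * f r` with `q = l⁻¹ ^ T`, and the sum over `n ≥ 1` is at most
`2 * l * q * f r` if `q ≤ 1/2`. We may assume `l > 1`, so `q` can be made so small that the loss is
at most `(2m - 1 - l) * f r`.
-/

/-- A word over the alphabet `{x₁^{±1},…,x_m^{±1}}` is modelled as a list of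
pairs `(i, b)` where `i : Fin m` indexes the generator and `b : Bool` records
the sign. A word is reduced if it contains no subword `x x⁻¹` or `x⁻¹ x`. -/
def ReducedWord {m : ℕ} (w : List (Fin m × Bool)) : Prop :=
  List.Chain' (fun a b => ¬(a.1 = b.1 ∧ a.2 ≠ b.2)) w

/-- A word is `t`-aperiodic if it contains no non-empty subword of the form
`Y^t` (that is, `t` consecutive copies of a non-empty word `Y`). -/
def TAperiodic {α : Type*} (t : ℕ) (w : List α) : Prop :=
  ∀ Y : List α, Y ≠ [] → ¬ (List.flatten (List.replicate t Y) <:+: w)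

/-- The good words: reduced `t`-aperiodic words of length `r`. -/
def goodSet (m t r : ℕ) : Set (List (Fin m × Bool)) :=
  {w | w.length = r ∧ ReducedWord w ∧ TAperiodic t w}

lemma goodSet_finite (m t r : ℕ) : (goodSet m t r).Finite :=
  (List.finite_length_eq (Fin m × Bool) r).subset fun _ h => h.1

/-- `goodSet` as a finset. -/
noncomputable def good (m t r : ℕ) : Finset (List (Fin m × Bool)) :=
  (goodSet_finite m t r).toFinset

lemma mem_good {m t r : ℕ} {w : List (Fin m × Bool)} :
    w ∈ good m t r ↔ w.length = r ∧ ReducedWord w ∧ TAperiodic t w := by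
  simp [good, goodSet]

lemma natCard_good (m t r : ℕ) :
    Nat.card {w : List (Fin m × Bool) // w.length = r ∧ ReducedWord w ∧ TAperiodic t w}
      = (good m t r).card :=
  Nat.subtype_card _ fun _ => mem_good

lemma nil_mem_good (m T : ℕ) : [] ∈ good m (T + 1) 0 := by
  rw [mem_good]
  refine ⟨rfl, List.isChain_nil, fun Y hY h => hY ?_⟩
  have := List.infix_nil.1 h
  simpa using this

open Classical in
/-- The letters `a` for which `a :: w` is reduced, given that `w` is. -/
noncomputable def letters {m : ℕ} (w : List (Fin m × Bool)) : Finset (Fin m × Bool) :=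
  Finset.univ.filter fun a => ∀ b ∈ w.head?, ¬(a.1 = b.1 ∧ a.2 ≠ b.2)

lemma card_letters {m : ℕ} (w : List (Fin m × Bool)) : 2 * m ≤ (letters w).card + 1 := by
  classical
  have hu : (Finset.univ : Finset (Fin m × Bool)).card = 2 * m := by
    simp [Finset.card_univ, mul_comm]
  cases w with
  | nil => simp [letters, mul_comm]
  | cons b w =>
    have h : Finset.univ.erase (b.1, !b.2) ⊆ letters (b :: w) := by
      rintro ⟨i, s⟩ hx
      obtain ⟨j, s'⟩ := b
      refine Finset.mem_filter.2 ⟨Finset.mem_univ _, ?_⟩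
      rintro _ ⟨⟩ ⟨h1, h2⟩
      cases s <;> cases s' <;> simp_all
    have h1 := Finset.card_le_card h
    rw [Finset.card_erase_of_mem (Finset.mem_univ _), hu] at h1
    omega

/-- The reduced one-letter extensions of the good words of length `r`. -/
noncomputable def ext1 (m t r : ℕ) : Finset (List (Fin m × Bool)) :=
  ((good m t r).sigma fun w => letters w).map
    ⟨fun p => p.2 :: p.1, by rintro ⟨w, a⟩ ⟨w', a'⟩ h; simp_all⟩

lemma card_ext1 (m t r : ℕ) :
    2 * m * (good m t r).card ≤ (ext1 m t r).card + (good m t r).card := by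
  rw [ext1, Finset.card_map, Finset.card_sigma, mul_comm, ← smul_eq_mul, ← Finset.sum_const,
    Finset.card_eq_sum_ones (good m t r), ← Finset.sum_add_distrib]
  exact Finset.sum_le_sum fun w _ => card_letters w

open Classical in
/-- A word of length `r + 1` obtained by extending a good word is good, or arises from a shorter
good word `u` by prepending `T` copies of its initial segment of some length `n + 1`. -/
lemma ext1_subset (m T r : ℕ) (hT : 1 ≤ T) :
    ext1 m (T + 1) r ⊆ good m (T + 1) (r + 1) ∪
      ((Finset.range (r + 1)).filter fun n => T * (n + 1) ≤ r + 1).biUnion fun n =>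
        (good m (T + 1) (r + 1 - T * (n + 1))).image
          fun u => (List.replicate T (u.take (n + 1))).flatten ++ u := by
  intro v hv
  obtain ⟨⟨w, a⟩, hwa, rfl⟩ := Finset.mem_map.1 hv
  obtain ⟨hw, ha⟩ := Finset.mem_sigma.1 hwa
  change a :: w ∈ _
  obtain ⟨hlen, hred, hap⟩ := mem_good.1 hw
  replace ha := (Finset.mem_filter.1 ha).2
  rw [Finset.mem_union]
  by_cases hper : TAperiodic (T + 1) (a :: w)
  · refine Or.inl (mem_good.2 ⟨by simp [hlen], ?_, hper⟩)
    exact List.isChain_cons.2 ⟨ha, hred⟩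
  right
  simp only [TAperiodic, not_forall, not_not] at hper
  obtain ⟨Y, hY, hin⟩ := hper
  rcases List.infix_cons_iff.1 hin with hpre | hin
  swap
  · exact absurd hin (hap Y hY)
  obtain ⟨s, hs⟩ := hpre
  rw [List.replicate_succ', List.flatten_append, List.append_assoc] at hs
  simp only [List.flatten_cons, List.flatten_nil, List.append_nil] at hs
  obtain ⟨n, hn⟩ : ∃ n, Y.length = n + 1 :=
    Nat.exists_eq_succ_of_ne_zero (by simpa using hY)
  have hl := congrArg List.length hs
  simp only [List.length_append, List.length_flatten, List.map_replicate, List.sum_replicate,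
    smul_eq_mul, List.length_cons, hlen, hn] at hl
  have hnT : n + 1 ≤ T * (n + 1) := Nat.le_mul_of_pos_left _ hT
  -- As `T ≥ 1`, the remaining word is a suffix of `w`, and so inherits being good.
  have hsuf : Y ++ s <:+ w := by
    cases hc : (List.replicate T Y).flatten with
    | nil =>
      have := congrArg List.length hc
      simp [hn] at this
      omega
    | cons c rest =>
      rw [hc, List.cons_append, List.cons.injEq] at hs
      exact ⟨rest, hs.2⟩
  simp only [Finset.mem_biUnion, Finset.mem_filter, Finset.mem_range, Finset.mem_image]
  refine ⟨n, ⟨by omega, by omega⟩, Y ++ s, mem_good.2 ⟨?_, ?_, ?_⟩, ?_⟩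
  · simp only [List.length_append, hn]; omega
  · exact List.IsChain.suffix hred hsuf
  · exact fun Z hZ h => hap Z hZ (h.trans hsuf.isInfix)
  · rw [← hn, List.take_left, hs]

lemma card_step (m T r : ℕ) (hT : 1 ≤ T) :
    2 * m * (good m (T + 1) r).card ≤ (good m (T + 1) (r + 1)).card +
      (∑ n ∈ (Finset.range (r + 1)).filter fun n => T * (n + 1) ≤ r + 1,
        (good m (T + 1) (r + 1 - T * (n + 1))).card) + (good m (T + 1) r).card := by
  classical
  refine (card_ext1 m (T + 1) r).trans (Nat.add_le_add_right ?_ _)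
  refine (Finset.card_le_card (ext1_subset m T r hT)).trans ((Finset.card_union_le _ _).trans ?_)
  refine Nat.add_le_add_left (Finset.card_biUnion_le.trans ?_) _
  exact Finset.sum_le_sum fun n _ => Finset.card_image_le

lemma geom_bound (q : ℝ) (h0 : 0 ≤ q) (h1 : q ≤ 1 / 2) (N : ℕ) :
    ∑ n ∈ Finset.range N, q ^ (n + 1) ≤ 2 * q - 2 * q ^ (N + 1) := by
  induction N with
  | zero => simp
  | succ N ih =>
    rw [Finset.sum_range_succ]
    have : q ^ (N + 1) * q ≤ q ^ (N + 1) * (1 / 2) := by gcongr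
    rw [pow_succ q (N + 1)]
    linarith

/-- The growth estimate `l * f r ≤ f (r + 1)`. -/
lemma growth (m T : ℕ) (hT : 1 ≤ T) (l : ℝ) (hl : 1 < l) (hq : (l⁻¹) ^ T ≤ 1 / 2)
    (hq' : 2 * l * (l⁻¹) ^ T ≤ 2 * m - 1 - l) (r : ℕ) :
    l * ((good m (T + 1) r).card : ℝ) ≤ (good m (T + 1) (r + 1)).card := by
  induction r using Nat.strong_induction_on with
  | _ r ih =>
  set f : ℕ → ℝ := fun r => ((good m (T + 1) r).card : ℝ) with hf
  have hl0 : 0 < l := by linarith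
  have hf0 : ∀ k, 0 ≤ f k := fun k => Nat.cast_nonneg _
  have hdecay : ∀ d k, k + d = r → f k ≤ l⁻¹ ^ d * f r := by
    intro d
    induction d with
    | zero => rintro k rfl; simp
    | succ d ihd =>
      intro k hk
      have h1 := ihd (k + 1) (by omega)
      have h2 : l * f k ≤ f (k + 1) := ih k (by omega)
      have h3 : f k ≤ l⁻¹ * f (k + 1) := by
        rw [← div_eq_inv_mul, le_div_iff₀ hl0]; linarith
      calc f k ≤ l⁻¹ * f (k + 1) := h3
        _ ≤ l⁻¹ * (l⁻¹ ^ d * f r) := by gcongr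
        _ = _ := by ring
  have hstep : 2 * m * f r ≤ f (r + 1) +
      (∑ n ∈ (Finset.range (r + 1)).filter fun n => T * (n + 1) ≤ r + 1,
        f (r + 1 - T * (n + 1))) + f r := by
    simp only [hf]
    exact_mod_cast card_step m T r hT
  have hsum : (∑ n ∈ (Finset.range (r + 1)).filter fun n => T * (n + 1) ≤ r + 1,
        f (r + 1 - T * (n + 1))) ≤ l * f r * (2 * l⁻¹ ^ T) := by
    calc _ ≤ ∑ n ∈ (Finset.range (r + 1)).filter fun n => T * (n + 1) ≤ r + 1,
          l * f r * (l⁻¹ ^ T) ^ (n + 1) := by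
          refine Finset.sum_le_sum fun n hn => ?_
          have hle := (Finset.mem_filter.1 hn).2
          have hpos : 0 < T * (n + 1) := by positivity
          refine (hdecay (T * (n + 1) - 1) _ (by omega)).trans (le_of_eq ?_)
          rw [← pow_mul]
          obtain ⟨d, hd⟩ := Nat.exists_eq_succ_of_ne_zero hpos.ne'
          rw [hd, Nat.succ_sub_one, Nat.succ_eq_add_one, pow_succ]
          field_simp
      _ ≤ ∑ n ∈ Finset.range (r + 1), l * f r * (l⁻¹ ^ T) ^ (n + 1) :=
          Finset.sum_le_sum_of_subset_of_nonneg (Finset.filter_subset _ _) fun n _ _ => by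
            have := hf0 r
            positivity
      _ ≤ _ := by
          rw [← Finset.mul_sum]
          have h1 := geom_bound (l⁻¹ ^ T) (by positivity) hq (r + 1)
          have h2 : 0 ≤ (l⁻¹ ^ T) ^ (r + 1 + 1) := by positivity
          have := hf0 r
          gcongr
          linarith
  have hfin := mul_le_mul_of_nonneg_right hq' (hf0 r)
  change l * f r ≤ f (r + 1)
  linarith

theorem statement6 (m : ℕ) (hm : 2 ≤ m) (l : ℝ) (hl0 : 0 < l)
    (hl : l < 2 * m - 1) :
    ∃ t : ℕ, 2 ≤ t ∧ ∀ r : ℕ, 1 ≤ r →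
      l ^ r ≤ (Nat.card {w : List (Fin m × Bool) //
        w.length = r ∧ ReducedWord w ∧ TAperiodic t w} : ℝ) := by
  have hm' : (2 : ℝ) ≤ m := by exact_mod_cast hm
  -- Enlarging `l` to some `L > 1` still below `2m - 1 ≥ 3`.
  obtain ⟨L, hlL, hL1, hL⟩ : ∃ L : ℝ, l ≤ L ∧ 1 < L ∧ L < 2 * m - 1 :=
    ⟨max l 2, le_max_left _ _, lt_max_of_lt_right one_lt_two, max_lt hl (by linarith)⟩
  have hL0 : 0 < L := by linarith
  obtain ⟨T, hT⟩ := exists_pow_lt_of_lt_one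
    (show 0 < min (1 / 2 : ℝ) ((2 * m - 1 - L) / (2 * L)) from
      lt_min (by norm_num) (div_pos (by linarith) (by linarith))) (inv_lt_one_of_one_lt₀ hL1)
  obtain ⟨h1, h2⟩ := lt_min_iff.1 hT
  have hT1 : 1 ≤ T := by
    by_contra h
    obtain rfl : T = 0 := by omega
    norm_num at h1
  rw [lt_div_iff₀ (by linarith)] at h2
  have hg := growth m T hT1 L hL1 h1.le (by linarith)
  have hpow : ∀ r, L ^ r ≤ ((good m (T + 1) r).card : ℝ) := by
    intro r
    induction r with
    | zero =>
      have : 0 < (good m (T + 1) 0).card := Finset.card_pos.2 ⟨_, nil_mem_good m T⟩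
      simpa using Nat.one_le_iff_ne_zero.2 this.ne'
    | succ r ih =>
      refine le_trans ?_ (hg r)
      rw [pow_succ']
      gcongr
  refine ⟨T + 1, by omega, fun r _ => ?_⟩
  rw [natCard_good]
  exact (pow_le_pow_left₀ hl0.le hlL r).trans (hpow r)
end

section
/- Let θ be a real number with 0 < θ < 1/2 and let m be an integer with m > 2^{3/θ}. Then there exists r₀ such that for every integer r ≥ r₀, the number of θ-words of length r over the alphabet {x_1^{±1},…,x_m^{±1}} is less than (2m − 1)^{(1 − θ/2) r}. -/
/-- A `θ`-word: a reduced word `w` containing at least `θ * |w|` pairwise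
disjoint occurrences of squares `x^{±2}` of generators. An occurrence of a
square at position `i` means the letters at positions `i` and `i+1` are
equal; disjointness of the occurrences at positions `i ≠ j` means
`|i - j| ≥ 2`. -/
def IsThetaWord {m : ℕ} (θ : ℝ) (w : List (Fin m × Bool)) : Prop :=
  ReducedWord w ∧
    ∃ P : Finset ℕ,
      θ * w.length ≤ (P.card : ℝ) ∧
      (∀ i ∈ P, i + 1 < w.length ∧ w[i]? = w[i + 1]?) ∧
      (∀ i ∈ P, ∀ j ∈ P, i ≠ j → i + 2 ≤ j ∨ j + 2 ≤ i)

/-- The weight `q ^ c(w)` of a nonempty word `w`, with `c(w)` the number of pairs of equal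
consecutive letters, written as a product over the consecutive pairs. -/
def wordWeight {A : Type*} [DecidableEq A] (q : ℝ) {s : ℕ} (w : Fin (s + 1) → A) : ℝ :=
  ∏ i : Fin s, if w i.castSucc = w i.succ then q else 1

theorem wordWeight_cons {A : Type*} [DecidableEq A] (q : ℝ) {s : ℕ} (a : A)
    (v : Fin (s + 1) → A) :
    wordWeight q (Fin.cons a v : Fin (s + 2) → A)
      = (if a = v 0 then q else 1) * wordWeight q v := by
  unfold wordWeight
  rw [Fin.prod_univ_succ]
  simp

/-- The total weight of all words of length `s + 1`. -/
theorem sum_wordWeight {A : Type*} [DecidableEq A] [Fintype A] (q : ℝ) (s : ℕ) :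
    ∑ w : Fin (s + 1) → A, wordWeight q w
      = Fintype.card A * (q + (Fintype.card A - 1)) ^ s := by
  induction s with
  | zero => simp [wordWeight]
  | succ s ih =>
    -- Summing over the first letter, exactly one choice repeats the second letter.
    have hk : ∀ b : A, ∑ a : A, (if a = b then q else 1) = q + (Fintype.card A - 1) := by
      intro b
      have h : ∀ a : A, (if a = b then q else 1) = (if a = b then q - 1 else 0) + 1 := by
        intro a; split_ifs <;> ring
      simp only [h, Finset.sum_add_distrib, Finset.sum_ite_eq', Finset.mem_univ, if_true]
      simp
      ring
    rw [← (Fin.consEquiv (fun _ : Fin (s + 2) => A)).sum_comp, Fintype.sum_prod_type_right]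
    have h : ∀ v : Fin (s + 1) → A,
        ∑ a : A, wordWeight q ((Fin.consEquiv (fun _ : Fin (s + 2) => A)) (a, v))
          = (q + (Fintype.card A - 1)) * wordWeight q v := by
      intro v
      rw [← hk (v 0), Finset.sum_mul]
      exact Finset.sum_congr rfl fun a _ => wordWeight_cons q a v
    rw [Finset.sum_congr rfl fun v _ => h v, ← Finset.mul_sum, ih]
    ring

/-- If consecutive letters of `w` agree at every position of `P`, then `w` has weight at least
`q ^ |P|`. -/
theorem le_wordWeight {A : Type*} [DecidableEq A] {q : ℝ} (hq : 1 ≤ q) {s : ℕ}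
    (w : Fin (s + 1) → A) (P : Finset ℕ)
    (hP : ∀ i ∈ P, i + 1 < (List.ofFn w).length ∧ (List.ofFn w)[i]? = (List.ofFn w)[i + 1]?) :
    q ^ P.card ≤ wordWeight q w := by
  have hw : wordWeight q w
      = q ^ (Finset.univ.filter fun i : Fin s => w i.castSucc = w i.succ).card := by
    simp [wordWeight, Finset.prod_ite]
  rw [hw]
  refine pow_le_pow_right₀ hq ?_
  have hsub : P ⊆ (Finset.univ.filter fun i : Fin s => w i.castSucc = w i.succ).image
      Fin.val := by
    intro i hi
    obtain ⟨h1, h2⟩ := hP i hi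
    rw [List.length_ofFn] at h1
    have hi1 : i < s := by omega
    rw [List.getElem?_eq_getElem (by simp; omega),
      List.getElem?_eq_getElem (by simp; omega)] at h2
    simp only [List.getElem_ofFn, Option.some.injEq] at h2
    simp only [Finset.mem_image, Finset.mem_filter, Finset.mem_univ, true_and]
    exact ⟨⟨i, hi1⟩, h2, rfl⟩
  exact (Finset.card_le_card hsub).trans Finset.card_image_le

/-- Markov's inequality for the weight, applied to `θ`-words. -/
theorem card_thetaWord_mul_le {m : ℕ} {θ q : ℝ} (hq : 1 ≤ q) (s : ℕ) :
    (Nat.card {w : List (Fin m × Bool) // w.length = s + 1 ∧ IsThetaWord θ w} : ℝ)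
        * q ^ (θ * ((s + 1 : ℕ) : ℝ))
      ≤ (2 * m : ℝ) * (q + (2 * m - 1)) ^ s := by
  classical
  set F := Finset.univ.filter fun w : Fin (s + 1) → Fin m × Bool =>
    q ^ (θ * ((s + 1 : ℕ) : ℝ)) ≤ wordWeight q w with hF
  have hcard : Nat.card {w : List (Fin m × Bool) // w.length = s + 1 ∧ IsThetaWord θ w}
      ≤ F.card := by
    have hsub : {w : List (Fin m × Bool) | w.length = s + 1 ∧ IsThetaWord θ w}
        ⊆ (F.image List.ofFn : Finset (List (Fin m × Bool))) := by
      rintro l ⟨hl, -, P, hP, hsq, -⟩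
      obtain ⟨w, rfl⟩ : ∃ w : Fin (s + 1) → Fin m × Bool, List.ofFn w = l := by
        refine ⟨fun i => l.get (i.cast hl.symm), List.ext_getElem (by simp [hl]) ?_⟩
        intro i h1 h2
        rw [List.getElem_ofFn]
        rfl
      simp only [Finset.coe_image, Set.mem_image, Finset.mem_coe]
      refine ⟨w, ?_, rfl⟩
      simp only [hF, Finset.mem_filter, Finset.mem_univ, true_and]
      refine le_trans ?_ (le_wordWeight hq w P hsq)
      rw [← Real.rpow_natCast]
      rw [hl] at hP
      exact Real.rpow_le_rpow_of_exponent_le hq hP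
    have h := Set.ncard_le_ncard hsub (Finset.finite_toSet _)
    rw [Set.ncard_coe_finset] at h
    exact h.trans Finset.card_image_le
  have hq0 : 0 ≤ q := by linarith
  have hnn : ∀ w : Fin (s + 1) → Fin m × Bool, 0 ≤ wordWeight q w := fun w =>
    Finset.prod_nonneg fun i _ => by split_ifs <;> linarith
  calc _ ≤ (F.card : ℝ) * q ^ (θ * ((s + 1 : ℕ) : ℝ)) := by gcongr
    _ ≤ ∑ w ∈ F, wordWeight q w := by
        rw [← nsmul_eq_mul]
        exact Finset.card_nsmul_le_sum _ _ _ fun w hw => (Finset.mem_filter.1 hw).2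
    _ ≤ ∑ w, wordWeight q w :=
        Finset.sum_le_sum_of_subset_of_nonneg (Finset.subset_univ _) fun w _ _ => hnn w
    _ = _ := by
        rw [sum_wordWeight]
        have : (Fintype.card (Fin m × Bool) : ℝ) = 2 * m := by
          simp [mul_comm]
        rw [this]

theorem statement8 (θ : ℝ) (hθ0 : 0 < θ) (hθ : θ < 1 / 2)
    (m : ℕ) (hm : (2 : ℝ) ^ (3 / θ) < m) :
    ∃ r₀ : ℕ, ∀ r : ℕ, r₀ ≤ r →
      (Nat.card {w : List (Fin m × Bool) //
          w.length = r ∧ IsThetaWord θ w} : ℝ)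
        < (2 * (m : ℝ) - 1) ^ ((1 - θ / 2) * (r : ℝ)) := by
  have hm1 : (1 : ℝ) < m :=
    lt_trans (Real.one_lt_rpow (by norm_num) (by positivity)) hm
  set q : ℝ := 2 * (m : ℝ) - 1 with hqdef
  have hq1 : 1 ≤ q := by linarith
  have hq0 : 0 < q := by linarith
  have h2 : 2 < q ^ (θ / 2) := by
    calc (2 : ℝ) = 2 ^ (1 : ℝ) := by simp
      _ < 2 ^ (3 / 2 : ℝ) := Real.rpow_lt_rpow_of_exponent_lt (by norm_num) (by norm_num)
      _ = ((2 : ℝ) ^ (3 / θ)) ^ (θ / 2) := by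
          rw [← Real.rpow_mul (by norm_num)]
          congr 1
          field_simp
      _ < q ^ (θ / 2) :=
          Real.rpow_lt_rpow (by positivity) (by linarith) (by positivity)
  refine ⟨1, fun r hr => ?_⟩
  obtain ⟨s, rfl⟩ : ∃ s, r = s + 1 := ⟨r - 1, by omega⟩
  have hpos : 0 < q ^ (θ * ((s + 1 : ℕ) : ℝ)) := Real.rpow_pos_of_pos hq0 _
  refine lt_of_mul_lt_mul_right ?_ hpos.le
  calc _ ≤ (2 * m : ℝ) * (q + (2 * m - 1)) ^ s := card_thetaWord_mul_le hq1 s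
    _ = (2 * m : ℝ) * (2 * q) ^ s := by rw [← hqdef, two_mul q]
    _ ≤ (2 * q) * (2 * q) ^ s := by gcongr; linarith
    _ = 2 ^ (s + 1) * q ^ (s + 1) := by ring
    _ < (q ^ (θ / 2)) ^ (s + 1) * q ^ (s + 1) := by gcongr
    _ = q ^ ((1 - θ / 2) * ((s + 1 : ℕ) : ℝ)) * q ^ (θ * ((s + 1 : ℕ) : ℝ)) := by
        rw [← Real.rpow_natCast, ← Real.rpow_natCast, ← Real.rpow_mul hq0.le,
          ← Real.rpow_add hq0, ← Real.rpow_add hq0]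
        congr 1
        push_cast
        ring
end

section
/- Let G be a countable group and let μ be a probability measure on G with μ({1}) > 0. Then the total variation distance between consecutive convolution powers of μ tends to zero: sup_{A ⊆ G} |μ^{*(i+1)}(A) − μ^{*i}(A)| → 0 as i → ∞. -/
/-!
Let `P` be the averaging operator `(P f) x = ∑ h, μ h * f (x * h)` on bounded functions, so that
`μ^{*i}(A)` is the value at `1` of `P ^ i` applied to the indicator of `A` (`convPowMeas_facts`).
The total variation distance is therefore at most `‖P ^ (i + 1) - P ^ i‖`. Since `μ` has an atom
at `1`, `P = p + q T` with `p, q > 0`, `p + q = 1` and `‖T‖ ≤ 1`.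

Writing `N = n + 1`, the coefficient of `T ^ k` in `N p q (p + q T) ^ n (1 - T)` is
`(N q - k) * P (Bin (N, q) = k)` (`smul_pow_mul_one_sub`). The sum of the absolute values of these
coefficients is the mean absolute deviation of the binomial law, hence at most its standard
deviation `√(N p q)` (`sum_abs_binomial_sq_le`, from the variance identity for Bernstein
polynomials). As `P ^ (n + 1) - P ^ n = -q (1 - T) P ^ n`, this yields
`‖P ^ (n + 1) - P ^ n‖ ≤ √(q / (p N))`, which tends to `0`.
-/

open Filter Topology

/-- Convolution of two (discrete) measures on a group. -/
noncomputable def convMeas {G : Type*} [Group G] (μ ν : G → ℝ) : G → ℝ :=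
  fun g => ∑' h : G, μ h * ν (h⁻¹ * g)

open Classical in
/-- `i`-fold convolution power of a measure: the distribution of the `i`-th
step of the random walk with step distribution `μ`. -/
noncomputable def convPowMeas {G : Type*} [Group G] (μ : G → ℝ) : ℕ → G → ℝ
  | 0 => fun g => if g = 1 then 1 else 0
  | i + 1 => convMeas (convPowMeas μ i) μ

/-- The measure of a set under a discrete measure. -/
noncomputable def measSet {G : Type*} (μ : G → ℝ) (A : Set G) : ℝ :=
  ∑' a : A, μ (a : G)
/-! ### Binomial estimate for lazy power-bounded elements -/

open Finset in
/-- The mean of a binomial law, in operator form: differentiating `(a + b) ^ (n + 1)` in the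
direction of `b`. -/
lemma sum_mul_choose_smul {R : Type*} [Ring R] [Algebra ℝ R] (p q : ℝ) (T : R) (n : ℕ) :
    ∑ k ∈ range (n + 2), ((k : ℝ) * ((n + 1).choose k * q ^ k * p ^ (n + 1 - k))) • T ^ k
      = ((n + 1 : ℕ) : ℝ) • q • (T * (p • (1 : R) + q • T) ^ n) := by
  have hc : Commute (q • T) (p • (1 : R)) := (Commute.one_right _).smul_right p
  rw [sum_range_succ', add_comm (p • (1 : R)), hc.add_pow]
  simp only [CharP.cast_eq_zero, zero_mul, zero_smul, add_zero, mul_sum, smul_sum]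
  refine sum_congr rfl fun k _ => ?_
  have h1 : (n + 1 : ℝ) * n.choose k = (n + 1).choose (k + 1) * (k + 1) := by
    exact_mod_cast Nat.add_one_mul_choose_eq n k
  have h2 : ((n.choose k : ℕ) : R) = algebraMap ℝ R (n.choose k : ℝ) := by simp
  rw [Nat.add_sub_add_right, smul_pow, smul_pow, one_pow, h2, ← Algebra.commutes,
    ← Algebra.smul_def]
  simp only [mul_smul_comm, smul_smul, mul_one, ← pow_succ']
  congr 1
  push_cast
  linear_combination (-(q ^ (k + 1) * p ^ (n - k))) * h1

open Finset in
lemma sum_choose_smul {R : Type*} [Ring R] [Algebra ℝ R] (p q : ℝ) (T : R) (n : ℕ) :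
    ∑ k ∈ range (n + 1), ((n.choose k : ℝ) * q ^ k * p ^ (n - k)) • T ^ k
      = (p • (1 : R) + q • T) ^ n := by
  have hc : Commute (q • T) (p • (1 : R)) := (Commute.one_right _).smul_right p
  rw [add_comm (p • (1 : R)), hc.add_pow]
  refine sum_congr rfl fun k _ => ?_
  have h2 : ((n.choose k : ℕ) : R) = algebraMap ℝ R (n.choose k : ℝ) := by simp
  rw [smul_pow, smul_pow, one_pow, h2, ← Algebra.commutes, ← Algebra.smul_def]
  simp only [mul_smul_comm, smul_smul, mul_one]
  congr 1
  ring

open Finset in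
/-- The coefficient of `T ^ k` in `(n + 1) p q (p + q T) ^ n (1 - T)` is the centred binomial
weight `((n + 1) q - k) * P (Bin (n + 1, q) = k)`. -/
lemma smul_pow_mul_one_sub {R : Type*} [Ring R] [Algebra ℝ R] (p q : ℝ) (hpq : p + q = 1)
    (T : R) (n : ℕ) :
    (((n + 1 : ℕ) : ℝ) * p * q) • ((1 - T) * (p • (1 : R) + q • T) ^ n)
      = ∑ k ∈ range (n + 2), ((((n + 1 : ℕ) : ℝ) * q - k) *
          ((n + 1).choose k * q ^ k * p ^ (n + 1 - k))) • T ^ k := by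
  simp only [sub_mul, sub_smul, sum_sub_distrib]
  rw [sum_mul_choose_smul]
  simp only [mul_smul _ (Nat.choose _ _ * _ * _ : ℝ), ← smul_sum]
  rw [sum_choose_smul, pow_succ']
  obtain rfl : p = 1 - q := by linarith
  generalize ((1 - q) • (1 : R) + q • T) ^ n = S
  simp only [add_mul, smul_mul_assoc, one_mul]
  module

open Finset in
/-- Cauchy–Schwarz against the binomial law, whose variance is `N p q`. -/
lemma sum_abs_binomial_sq_le (p q : ℝ) (hp : 0 ≤ p) (hq : 0 ≤ q) (hpq : p + q = 1) (N : ℕ) :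
    (∑ k ∈ range (N + 1), |((N : ℝ) * q - k) * (N.choose k * q ^ k * p ^ (N - k))|) ^ 2
      ≤ N * p * q := by
  have hv := congrArg (Polynomial.eval q) (bernsteinPolynomial.variance ℝ N)
  have hs := congrArg (Polynomial.eval q) (bernsteinPolynomial.sum ℝ N)
  simp only [bernsteinPolynomial, Polynomial.eval_finsetSum, Polynomial.eval_mul,
    Polynomial.eval_pow, Polynomial.eval_sub, Polynomial.eval_X, Polynomial.eval_one,
    Polynomial.eval_natCast, nsmul_eq_mul] at hv hs
  obtain rfl : p = 1 - q := by linarith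
  refine (sum_sq_le_sum_mul_sum_of_sq_le_mul (range (N + 1))
    (f := fun k => ((N : ℝ) * q - k) ^ 2 * (N.choose k * q ^ k * (1 - q) ^ (N - k)))
    (g := fun k => N.choose k * q ^ k * (1 - q) ^ (N - k)) ?_ ?_ ?_).trans ?_
  · intro k _; positivity
  · intro k _; positivity
  · intro k _; rw [sq_abs]; apply le_of_eq; ring
  · rw [hv, hs]; apply le_of_eq; ring

/-- A lazy power-bounded element `P = p + q T` satisfies `‖P ^ (n + 1) - P ^ n‖ = O(n ^ (-1/2))`. -/
lemma norm_pow_succ_sub_pow_le {R : Type*} [NormedRing R] [NormedAlgebra ℝ R] (p q : ℝ)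
    (hp : 0 < p) (hq : 0 < q) (hpq : p + q = 1) (T : R) (hT : ∀ k, ‖T ^ k‖ ≤ 1) (n : ℕ) :
    ‖(p • (1 : R) + q • T) ^ (n + 1) - (p • (1 : R) + q • T) ^ n‖
      ≤ √(q / p * (1 / ((n : ℝ) + 1))) := by
  have hN : (0 : ℝ) < (n : ℝ) + 1 := by positivity
  have h1 : ‖(((n + 1 : ℕ) : ℝ) * p * q) • ((1 - T) * (p • (1 : R) + q • T) ^ n)‖ ^ 2
      ≤ (n + 1 : ℕ) * p * q := by
    refine le_trans ?_ (sum_abs_binomial_sq_le p q hp.le hq.le hpq (n + 1))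
    gcongr
    rw [smul_pow_mul_one_sub p q hpq]
    refine (norm_sum_le _ _).trans (Finset.sum_le_sum fun k _ => ?_)
    rw [norm_smul, Real.norm_eq_abs]
    exact mul_le_of_le_one_right (abs_nonneg _) (hT k)
  have h2 : (p • (1 : R) + q • T) ^ (n + 1) - (p • (1 : R) + q • T) ^ n
      = (-q) • ((1 - T) * (p • (1 : R) + q • T) ^ n) := by
    rw [pow_succ']
    obtain rfl : p = 1 - q := by linarith
    generalize ((1 - q) • (1 : R) + q • T) ^ n = S
    simp only [add_mul, sub_mul, smul_mul_assoc, one_mul]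
    module
  apply Real.le_sqrt_of_sq_le
  rw [h2, norm_smul, Real.norm_eq_abs, abs_neg, abs_of_pos hq]
  rw [norm_smul, Real.norm_eq_abs, abs_of_pos (by positivity)] at h1
  push_cast at h1
  generalize ‖(1 - T) * (p • (1 : R) + q • T) ^ n‖ = x at h1 ⊢
  have h3 : (q / p * (1 / ((n : ℝ) + 1))) = ((n + 1) * p * q) / ((n + 1) * p) ^ 2 := by
    field_simp
  rw [h3, le_div_iff₀ (by positivity)]
  calc _ = (((n : ℝ) + 1) * p * q * x) ^ 2 := by ring
    _ ≤ _ := h1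

/-! ### Averaging operators on bounded functions -/

section walk

open scoped ENNReal

/-- The Banach space `ℓ^∞(G)` of bounded real functions on `G`. -/
abbrev BddFun (G : Type*) : Type _ := lp (fun _ : G => ℝ) ∞

lemma BddFun.abs_le {G : Type*} (f : BddFun G) (x : G) : ‖f x‖ ≤ ‖f‖ :=
  lp.norm_apply_le_norm ENNReal.top_ne_zero f x

variable {G : Type*} [Group G]

/-- Right translation `f ↦ (x ↦ f (x * h))` on bounded functions. -/
noncomputable def rightTrans (h : G) : BddFun G →L[ℝ] BddFun G :=
  LinearMap.mkContinuous
    { toFun := fun f => ⟨fun x => f (x * h), memℓp_infty ⟨‖f‖, by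
        rintro _ ⟨x, rfl⟩
        exact BddFun.abs_le f _⟩⟩
      map_add' := fun _ _ => rfl
      map_smul' := fun _ _ => rfl } 1 (fun f => by
        rw [one_mul]
        exact lp.norm_le_of_forall_le (norm_nonneg _) fun x => BddFun.abs_le f _)

lemma rightTrans_apply (h : G) (f : BddFun G) (x : G) : rightTrans h f x = f (x * h) := rfl

lemma norm_rightTrans_le (h : G) : ‖rightTrans h‖ ≤ 1 :=
  LinearMap.mkContinuous_norm_le _ zero_le_one _

lemma rightTrans_one : rightTrans (1 : G) = 1 := by
  ext f x
  simp [rightTrans_apply]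

/-- The averaging operator `f ↦ (x ↦ ∑ h, μ h * f (x * h))` on bounded functions. -/
noncomputable def avgOp (μ : G → ℝ) : BddFun G →L[ℝ] BddFun G :=
  ∑' h : G, μ h • rightTrans h

lemma norm_smul_rightTrans_le {μ : G → ℝ} (hpos : ∀ g, 0 ≤ μ g) (h : G) :
    ‖μ h • rightTrans h‖ ≤ μ h := by
  rw [norm_smul, Real.norm_eq_abs, abs_of_nonneg (hpos h)]
  exact mul_le_of_le_one_right (hpos h) (norm_rightTrans_le h)

lemma summable_avgOp {μ : G → ℝ} (hpos : ∀ g, 0 ≤ μ g) (hs : Summable μ) :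
    Summable fun h : G => μ h • rightTrans h :=
  Summable.of_norm_bounded hs (norm_smul_rightTrans_le hpos)

lemma avgOp_apply {μ : G → ℝ} (hpos : ∀ g, 0 ≤ μ g) (hs : Summable μ) (f : BddFun G) (x : G) :
    avgOp μ f x = ∑' h, μ h * f (x * h) := by
  have := ((lp.evalCLM ℝ (fun _ : G => ℝ) ∞ x).comp
    (ContinuousLinearMap.apply ℝ (BddFun G) f)).map_tsum (summable_avgOp hpos hs)
  exact this

lemma norm_avgOp_le {μ : G → ℝ} (hpos : ∀ g, 0 ≤ μ g) (hs : Summable μ) :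
    ‖avgOp μ‖ ≤ ∑' g, μ g :=
  tsum_of_norm_bounded hs.hasSum (norm_smul_rightTrans_le hpos)

/-- Splitting off part of the atom at `1` leaves an averaging operator of smaller mass. -/
lemma norm_avgOp_sub_le {μ : G → ℝ} (hpos : ∀ g, 0 ≤ μ g) (hs : Summable μ) {p : ℝ}
    (hp : p ≤ μ 1) : ‖avgOp μ - p • 1‖ ≤ (∑' g, μ g) - p := by
  classical
  have hδ : HasSum (Pi.single (1 : G) p : G → ℝ) p := hasSum_pi_single 1 p
  have hδ' : HasSum (fun h : G => (Pi.single (1 : G) p : G → ℝ) h • rightTrans h)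
      (p • (1 : BddFun G →L[ℝ] BddFun G)) := by
    have := hasSum_single (f := fun h : G => (Pi.single (1 : G) p : G → ℝ) h • rightTrans h) 1
      (fun h hh => by rw [Pi.single_eq_of_ne hh]; exact zero_smul ℝ (rightTrans h))
    rwa [Pi.single_eq_same, rightTrans_one] at this
  have h1 : avgOp μ - p • 1 = avgOp (fun g => μ g - (Pi.single (1 : G) p : G → ℝ) g) := by
    have := (summable_avgOp hpos hs).hasSum.sub hδ'
    rw [avgOp, avgOp, ← this.tsum_eq]
    exact tsum_congr fun h => (sub_smul _ _ _).symm
  have h2 := hs.hasSum.sub hδ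
  rw [h1, ← h2.tsum_eq]
  refine norm_avgOp_le (fun g => ?_) h2.summable
  by_cases hg : g = 1
  · subst hg; simpa using hp
  · simpa [hg] using hpos g

/-- Duality between convolution and averaging: `∫ f d(ρ * μ) = ∫ (avgOp μ f) dρ`. -/
lemma convMeas_facts {ρ μ : G → ℝ} (hρ : ∀ g, 0 ≤ ρ g) (hρs : Summable ρ)
    (hμ : ∀ g, 0 ≤ μ g) (hμs : Summable μ) :
    (∀ g, 0 ≤ convMeas ρ μ g) ∧ Summable (convMeas ρ μ) ∧
      ∀ f : BddFun G, ∑' g, convMeas ρ μ g * f g = ∑' h, ρ h * avgOp μ f h := by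
  -- The change of variables `(h, k) ↦ (h, h⁻¹ * k)` turns the product measure into convolution.
  let e : G × G ≃ G × G :=
    { toFun := fun x => (x.1, x.1⁻¹ * x.2)
      invFun := fun x => (x.1, x.1 * x.2)
      left_inv := fun x => by simp
      right_inv := fun x => by simp }
  have hprod : Summable fun x : G × G => ρ x.1 * μ x.2 := hρs.mul_of_nonneg hμs hρ hμ
  have hconv : Summable fun x : G × G => ρ x.1 * μ (x.1⁻¹ * x.2) := e.summable_iff.2 hprod
  have hbdd : ∀ f : BddFun G, Summable fun x : G × G => ρ x.1 * μ (x.1⁻¹ * x.2) * f x.2 := by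
    intro f
    refine Summable.of_norm_bounded (hconv.mul_right ‖f‖) fun x => ?_
    rw [norm_mul, Real.norm_of_nonneg (mul_nonneg (hρ _) (hμ _))]
    exact mul_le_mul_of_nonneg_left (BddFun.abs_le f _) (mul_nonneg (hρ _) (hμ _))
  refine ⟨fun g => tsum_nonneg fun h => mul_nonneg (hρ _) (hμ _), hconv.prod_symm.prod, ?_⟩
  intro f
  calc ∑' g, convMeas ρ μ g * f g
      = ∑' g, ∑' h, ρ h * μ (h⁻¹ * g) * f g := by simp only [convMeas, tsum_mul_right]
    _ = ∑' h, ∑' g, ρ h * μ (h⁻¹ * g) * f g :=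
      (Summable.tsum_comm (f := fun h g => ρ h * μ (h⁻¹ * g) * f g) (hbdd f))
    _ = ∑' h, ρ h * avgOp μ f h := by
      refine tsum_congr fun h => ?_
      rw [avgOp_apply hμ hμs, ← tsum_mul_left, ← (Equiv.mulLeft h).tsum_eq]
      simp [mul_assoc]

/-- Iterated duality: `∫ f dμ^{*i} = (avgOp μ ^ i f) 1`. -/
lemma convPowMeas_facts {μ : G → ℝ} (hμ : ∀ g, 0 ≤ μ g) (hμs : Summable μ) (i : ℕ) :
    (∀ g, 0 ≤ convPowMeas μ i g) ∧ Summable (convPowMeas μ i) ∧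
      ∀ f : BddFun G, ∑' g, convPowMeas μ i g * f g = (avgOp μ ^ i) f 1 := by
  classical
  induction i with
  | zero =>
    refine ⟨fun g => ?_, ?_, fun f => ?_⟩
    · simp only [convPowMeas]; split_ifs <;> norm_num
    · exact (hasSum_ite_eq (1 : G) (1 : ℝ)).summable
    · simp [convPowMeas]
  | succ i ih =>
    obtain ⟨h1, h2, h3⟩ := convMeas_facts ih.1 ih.2.1 hμ hμs
    refine ⟨h1, h2, fun f => ?_⟩
    rw [pow_succ, mul_apply_eq_comp, ← ih.2.2]
    exact h3 f

/-- The total variation between consecutive steps is controlled by the averaging operator. -/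
lemma abs_measSet_sub_le {μ : G → ℝ} (hμ : ∀ g, 0 ≤ μ g) (hμs : Summable μ) (i : ℕ)
    (A : Set G) :
    |measSet (convPowMeas μ (i + 1)) A - measSet (convPowMeas μ i) A|
      ≤ ‖avgOp μ ^ (i + 1) - avgOp μ ^ i‖ := by
  classical
  have hb : ∀ x : G, ‖A.indicator (fun _ => (1 : ℝ)) x‖ ≤ 1 := fun x => by
    by_cases hx : x ∈ A <;> simp [hx]
  let f : BddFun G := ⟨A.indicator fun _ => (1 : ℝ), memℓp_infty ⟨1, by
    rintro _ ⟨x, rfl⟩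
    exact hb x⟩⟩
  have hf : ‖f‖ ≤ 1 := lp.norm_le_of_forall_le zero_le_one hb
  have key : ∀ j, measSet (convPowMeas μ j) A = (avgOp μ ^ j) f 1 := fun j => by
    rw [← (convPowMeas_facts hμ hμs j).2.2 f, measSet, tsum_subtype A (convPowMeas μ j)]
    refine tsum_congr fun g => ?_
    by_cases hg : g ∈ A <;> simp [f, hg]
  rw [key, key]
  calc _ = ‖((avgOp μ ^ (i + 1) - avgOp μ ^ i) f) 1‖ := rfl
    _ ≤ ‖(avgOp μ ^ (i + 1) - avgOp μ ^ i) f‖ := BddFun.abs_le _ _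
    _ ≤ ‖avgOp μ ^ (i + 1) - avgOp μ ^ i‖ * ‖f‖ := ContinuousLinearMap.le_opNorm _ _
    _ ≤ _ := mul_le_of_le_one_right (norm_nonneg _) hf

end walk

/-- The total variation distance between consecutive convolution powers of a
lazy probability measure on a countable group tends to zero. -/
theorem statement10 {G : Type*} [Group G] [Countable G] (μ : G → ℝ)
    (hpos : ∀ g, 0 ≤ μ g) (hsum : (∑' g : G, μ g) = 1) (hlazy : 0 < μ 1) :
    Tendsto
      (fun i : ℕ =>
        ⨆ A : Set G, |measSet (convPowMeas μ (i + 1)) A - measSet (convPowMeas μ i) A|)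
      atTop (𝓝 0) := by
  have hs : Summable μ := by
    by_contra h
    rw [tsum_eq_zero_of_not_summable h] at hsum
    exact zero_ne_one hsum
  have hle : μ 1 ≤ 1 := hsum ▸ hs.le_tsum 1 fun g _ => hpos g
  -- Half of the atom at `1` is kept in `T`, so that `q > 0` even when `μ` is the point mass.
  obtain ⟨p, hp0, hp1, hpμ⟩ : ∃ p : ℝ, 0 < p ∧ p < 1 ∧ p ≤ μ 1 :=
    ⟨μ 1 / 2, by linarith, by linarith, by linarith⟩
  have hq0 : 0 < 1 - p := by linarith
  let T : BddFun G →L[ℝ] BddFun G := (1 - p)⁻¹ • (avgOp μ - p • 1)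
  have hT : ‖T‖ ≤ 1 := by
    have := norm_avgOp_sub_le hpos hs hpμ
    rw [hsum] at this
    rw [norm_smul, norm_inv, Real.norm_of_nonneg hq0.le, inv_mul_le_iff₀ hq0]
    simpa using this
  have hTk : ∀ k, ‖T ^ k‖ ≤ 1
    | 0 => ContinuousLinearMap.norm_id_le
    | k + 1 => (norm_pow_le' T k.succ_pos).trans (pow_le_one₀ (norm_nonneg _) hT)
  have hP : avgOp μ = p • 1 + (1 - p) • T := by
    simp only [T, smul_smul, mul_inv_cancel₀ hq0.ne', one_smul]
    abel
  have hbound : ∀ i : ℕ, ‖avgOp μ ^ (i + 1) - avgOp μ ^ i‖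
      ≤ √((1 - p) / p * (1 / ((i : ℝ) + 1))) := fun i => by
    rw [hP]
    exact norm_pow_succ_sub_pow_le p (1 - p) hp0 hq0 (by ring) T hTk i
  refine squeeze_zero (fun i => Real.iSup_nonneg fun A => abs_nonneg _)
    (fun i => ciSup_le fun A => (abs_measSet_sub_le hpos hs i A).trans (hbound i)) ?_
  have := (tendsto_one_div_add_atTop_nhds_zero_nat (𝕜 := ℝ)).const_mul ((1 - p) / p)
  simpa using this.sqrt
end

section
/- Let G be a countable group, let μ be a probability measure on G with μ({1}) > 0 (a lazy random walk), and let A ⊆ G be any subset. Then the set of limit points of the real sequence (μ^{*i}(A))_{i=1}^∞ is a connected subset of ℝ. -/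
/-!
The sequence `a i = μ^{*i}(A)` is bounded and its increments tend to `0`; the limit points of such a
sequence form an interval, because the sequence cannot jump over an intermediate value infinitely
often without coming close to it (`isConnected_limitPoints`).

The increments are controlled by the Markov operator `P f g = ∑ k, μ k * f (g * k)` on bounded
functions, since `μ^{*i}(A) = (P ^ i 1_A) 1` (`hasSum_convPowMeas`). Laziness lets one write
`P = p + q S` with `p, q > 0`, `p + q = 1` and `‖S‖ ≤ 1`. Differentiating the binomial formula
gives `N p q P ^ (N - 1) (1 - S) = ∑ k, b k (N q - k) S ^ k` with `b` the binomial weights of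
parameters `N, q`, so the norm of the left side is at most the mean absolute deviation of a binomial
variable, which is at most `√N` by the variance formula. Hence
`‖P ^ N - P ^ (N + 1)‖ = O(1 / √N)` (`norm_pow_mul_one_sub_le`).
-/

open Filter Topology

section Helpers

open BoundedContinuousFunction

/-! ### Averaged elements of a normed algebra -/

/-- The derivative in `X` of the binomial formula for `(p + q X) ^ (n + 1)`, multiplied by `X`
and evaluated at `S`. -/
lemma sum_mul_binomial {R : Type*} [NormedRing R] [NormedAlgebra ℝ R] (S : R) (p q : ℝ) (n : ℕ) :
    ∑ k ∈ Finset.range (n + 2),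
      ((k : ℝ) * ((n + 1).choose k * q ^ k * p ^ (n + 1 - k))) • S ^ k =
    ((n + 1 : ℝ) * q) • (S * (p • 1 + q • S) ^ n) := by
  have hc : Commute (q • S) (p • (1 : R)) := ((Commute.one_right S).smul_left q).smul_right p
  rw [Finset.sum_range_succ', add_comm (p • (1 : R)), hc.add_pow, Finset.mul_sum, Finset.smul_sum]
  simp only [Nat.cast_zero, zero_mul, zero_smul, add_zero]
  refine Finset.sum_congr rfl fun k hk => ?_
  have h1 : ((n : ℝ) + 1) * n.choose k = (n + 1).choose (k + 1) * (k + 1) := by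
    exact_mod_cast Nat.add_one_mul_choose_eq n k
  have h2 : n + 1 - (k + 1) = n - k := by omega
  rw [h2, smul_pow, smul_pow, one_pow, ← nsmul_eq_mul', ← Nat.cast_smul_eq_nsmul ℝ]
  simp only [mul_smul_comm, mul_one, smul_smul, ← pow_succ']
  congr 1
  push_cast
  linear_combination (-(q ^ (k + 1) * p ^ (n - k))) * h1

lemma sum_binomial {R : Type*} [NormedRing R] [NormedAlgebra ℝ R] (S : R) (p q : ℝ) (n : ℕ) :
    ∑ k ∈ Finset.range (n + 1), ((n.choose k : ℝ) * q ^ k * p ^ (n - k)) • S ^ k =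
    (p • 1 + q • S) ^ n := by
  have hc : Commute (q • S) (p • (1 : R)) := ((Commute.one_right S).smul_left q).smul_right p
  rw [add_comm (p • (1 : R)), hc.add_pow]
  refine Finset.sum_congr rfl fun k _ => ?_
  rw [smul_pow, smul_pow, one_pow, ← nsmul_eq_mul', ← Nat.cast_smul_eq_nsmul ℝ]
  simp only [mul_smul_comm, mul_one, smul_smul]
  congr 1
  ring

lemma binomial_variance (p q : ℝ) (hpq : p + q = 1) (n : ℕ) :
    ∑ k ∈ Finset.range (n + 1), ((n.choose k : ℝ) * q ^ k * p ^ (n - k)) * (n * q - k) ^ 2 =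
      n * q * p := by
  obtain rfl : p = 1 - q := by linarith
  have h := congrArg (Polynomial.eval q) (bernsteinPolynomial.variance ℝ n)
  simp only [Polynomial.eval_finsetSum, Polynomial.eval_mul, bernsteinPolynomial,
    Polynomial.eval_pow, Polynomial.eval_sub, Polynomial.eval_X,
    Polynomial.eval_natCast, Polynomial.eval_one, nsmul_eq_mul] at h
  rw [← h]
  exact Finset.sum_congr rfl fun k _ => by ring

/-- The mean absolute deviation of a binomial variable is at most `√n`. -/
lemma binomial_deviation_le (p q : ℝ) (hp : 0 < p) (hq : 0 < q) (hpq : p + q = 1) (n : ℕ)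
    (hn : 0 < n) :
    ∑ k ∈ Finset.range (n + 1), ((n.choose k : ℝ) * q ^ k * p ^ (n - k)) * |n * q - k| ≤ √n := by
  have hs : 0 < √(n : ℝ) := Real.sqrt_pos.2 (by exact_mod_cast hn)
  have hss : √(n : ℝ) * √n = n := Real.mul_self_sqrt (by positivity)
  have hone : ∑ k ∈ Finset.range (n + 1), ((n.choose k : ℝ) * q ^ k * p ^ (n - k)) = 1 := by
    have := sum_binomial (1 : ℝ) p q n
    simpa [hpq] using this
  have hvar := binomial_variance p q hpq n
  -- `2 √n |d| ≤ n + d²`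
  have key : 2 * √(n : ℝ) * ∑ k ∈ Finset.range (n + 1),
      ((n.choose k : ℝ) * q ^ k * p ^ (n - k)) * |n * q - k| ≤
      n * ∑ k ∈ Finset.range (n + 1), ((n.choose k : ℝ) * q ^ k * p ^ (n - k)) +
      ∑ k ∈ Finset.range (n + 1),
        ((n.choose k : ℝ) * q ^ k * p ^ (n - k)) * (n * q - k) ^ 2 := by
    rw [Finset.mul_sum, Finset.mul_sum, ← Finset.sum_add_distrib]
    refine Finset.sum_le_sum fun k _ => ?_
    have hw : 0 ≤ (n.choose k : ℝ) * q ^ k * p ^ (n - k) := by positivity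
    have hd : 2 * √(n : ℝ) * |n * q - k| ≤ n + (n * q - k) ^ 2 := by
      rw [← sq_abs (n * q - k : ℝ)]
      nlinarith [sq_nonneg (√(n : ℝ) - |n * q - k|)]
    nlinarith [mul_le_mul_of_nonneg_left hd hw]
  rw [hone, hvar] at key
  have hqp : q * p ≤ 1 := by nlinarith
  have hn0 : (0 : ℝ) ≤ n := by positivity
  have : 2 * √(n : ℝ) * ∑ k ∈ Finset.range (n + 1),
      ((n.choose k : ℝ) * q ^ k * p ^ (n - k)) * |n * q - k| ≤ 2 * √(n : ℝ) * √n := by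
    nlinarith [mul_le_mul_of_nonneg_left hqp hn0]
  exact le_of_mul_le_mul_left this (by positivity)

lemma norm_pow_mul_one_sub_le {R : Type*} [NormedRing R] [NormOneClass R] [NormedAlgebra ℝ R]
    (S : R) (hS : ‖S‖ ≤ 1) (p q : ℝ) (hp : 0 < p) (hq : 0 < q) (hpq : p + q = 1) (n : ℕ) :
    (n + 1) * p * ‖(p • 1 + q • S) ^ n - (p • 1 + q • S) ^ (n + 1)‖ ≤ √(n + 1 : ℕ) := by
  have hid : ∑ k ∈ Finset.range (n + 2), (((n + 1).choose k * q ^ k * p ^ (n + 1 - k)) *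
      ((n + 1 : ℕ) * q - k)) • S ^ k =
      ((n + 1 : ℝ) * p) • ((p • 1 + q • S) ^ n - (p • 1 + q • S) ^ (n + 1)) := by
    have h1 := sum_mul_binomial S p q n
    have h2 := sum_binomial S p q (n + 1)
    have h3 : ∑ k ∈ Finset.range (n + 2), (((n + 1).choose k * q ^ k * p ^ (n + 1 - k)) *
      ((n + 1 : ℕ) * q - k)) • S ^ k = ((n + 1 : ℝ) * q) • (p • 1 + q • S) ^ (n + 1) -
        ((n + 1 : ℝ) * q) • (S * (p • 1 + q • S) ^ n) := by
      rw [← h1, ← h2, Finset.smul_sum, ← Finset.sum_sub_distrib]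
      refine Finset.sum_congr rfl fun k _ => ?_
      rw [smul_smul, ← sub_smul]
      congr 1
      push_cast
      ring
    have h4 : ∀ T : R, (p • 1 + q • S) * T = p • T + q • (S * T) := fun T => by
      rw [add_mul, smul_mul_assoc, smul_mul_assoc, one_mul]
    rw [h3, pow_succ' (p • 1 + q • S) n, h4]
    generalize (p • 1 + q • S) ^ n = T
    clear h1 h2 h3 h4
    obtain rfl : p = 1 - q := by linarith
    module
  have hnorm : (n + 1) * p * ‖(p • 1 + q • S) ^ n - (p • 1 + q • S) ^ (n + 1)‖ =
      ‖((n + 1 : ℝ) * p) • ((p • 1 + q • S) ^ n - (p • 1 + q • S) ^ (n + 1))‖ := by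
    rw [norm_smul, Real.norm_of_nonneg (by positivity)]
  rw [hnorm, ← hid]
  refine le_trans (norm_sum_le _ _) (le_trans (Finset.sum_le_sum fun k _ => ?_)
    (binomial_deviation_le p q hp hq hpq (n + 1) n.succ_pos))
  rw [norm_smul, norm_mul, Real.norm_of_nonneg (by positivity), Real.norm_eq_abs]
  refine mul_le_of_le_one_right (by positivity) ?_
  exact (norm_pow_le S k).trans (pow_le_one₀ (norm_nonneg _) hS)

lemma tendsto_norm_pow_sub {R : Type*} [NormedRing R] [NormOneClass R] [NormedAlgebra ℝ R]
    (S : R) (hS : ‖S‖ ≤ 1) (p q : ℝ) (hp : 0 < p) (hq : 0 < q) (hpq : p + q = 1) :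
    Tendsto (fun n : ℕ => ‖(p • 1 + q • S) ^ n - (p • 1 + q • S) ^ (n + 1)‖) atTop (𝓝 0) := by
  have hlim : Tendsto (fun n : ℕ => (1 / p) * (√((n + 1 : ℕ) : ℝ))⁻¹) atTop (𝓝 0) := by
    have : Tendsto (fun n : ℕ => √((n + 1 : ℕ) : ℝ)) atTop atTop :=
      Real.tendsto_sqrt_atTop.comp (tendsto_natCast_atTop_atTop.comp (tendsto_add_atTop_nat 1))
    simpa using this.inv_tendsto_atTop.const_mul (1 / p)
  refine squeeze_zero (fun _ => norm_nonneg _) (fun n => ?_) hlim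
  have h := norm_pow_mul_one_sub_le S hS p q hp hq hpq n
  have hs : 0 < √((n + 1 : ℕ) : ℝ) := Real.sqrt_pos.2 (by positivity)
  have hss : √((n + 1 : ℕ) : ℝ) * √((n + 1 : ℕ) : ℝ) = n + 1 := by
    rw [Real.mul_self_sqrt (by positivity)]
    push_cast
    rfl
  rw [one_div, ← mul_inv, ← one_div, le_div_iff₀ (by positivity)]
  rw [← hss] at h
  refine le_of_mul_le_mul_left ?_ hs
  linarith

/-! ### The Markov operator -/

variable {G : Type*} [Group G]

lemma summable_weight_mul [TopologicalSpace G] {w : G → ℝ} (hw : Summable fun g => |w g|)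
    (f : G →ᵇ ℝ) (g : G) : Summable fun k => w k * f (g * k) := by
  refine Summable.of_norm_bounded (hw.mul_right ‖f‖) fun k => ?_
  rw [norm_mul]
  exact mul_le_mul_of_nonneg_left (f.norm_coe_le_norm _) (norm_nonneg _)

lemma norm_tsum_weight_le [TopologicalSpace G] {w : G → ℝ} (hw : Summable fun g => |w g|)
    (f : G →ᵇ ℝ) (g : G) : ‖∑' k, w k * f (g * k)‖ ≤ (∑' k, |w k|) * ‖f‖ := by
  rw [← tsum_mul_right]
  refine tsum_of_norm_bounded (hw.mul_right ‖f‖).hasSum fun k => ?_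
  rw [norm_mul]
  exact mul_le_mul_of_nonneg_left (f.norm_coe_le_norm _) (norm_nonneg _)

/-- The operator `f ↦ (g ↦ ∑ k, w k * f (g * k))` on bounded functions. The group carries the
discrete topology, so bounded continuous functions are all bounded functions. -/
noncomputable def averageOp [TopologicalSpace G] [DiscreteTopology G] (w : G → ℝ)
    (hw : Summable fun g => |w g|) : (G →ᵇ ℝ) →L[ℝ] (G →ᵇ ℝ) :=
  LinearMap.mkContinuous
    { toFun := fun f => BoundedContinuousFunction.ofNormedAddCommGroup
        (fun g => ∑' k, w k * f (g * k)) continuous_of_discreteTopology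
        ((∑' k, |w k|) * ‖f‖) (norm_tsum_weight_le hw f)
      map_add' := fun f f' => by
        ext g
        simp [mul_add, (summable_weight_mul hw f g).tsum_add (summable_weight_mul hw f' g)]
      map_smul' := fun c f => by
        ext g
        simp [mul_left_comm _ c, tsum_mul_left] }
    (∑' k, |w k|)
    (fun f => BoundedContinuousFunction.norm_ofNormedAddCommGroup_le _
      (mul_nonneg (tsum_nonneg fun _ => abs_nonneg _) (norm_nonneg _)) (norm_tsum_weight_le hw f))

lemma averageOp_apply [TopologicalSpace G] [DiscreteTopology G] (w : G → ℝ)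
    (hw : Summable fun g => |w g|) (f : G →ᵇ ℝ) (g : G) :
    averageOp w hw f g = ∑' k, w k * f (g * k) := rfl

lemma norm_averageOp_le [TopologicalSpace G] [DiscreteTopology G] (w : G → ℝ)
    (hw : Summable fun g => |w g|) : ‖averageOp w hw‖ ≤ ∑' k, |w k| :=
  ContinuousLinearMap.opNorm_le_bound _ (tsum_nonneg fun _ => abs_nonneg _) fun f =>
    BoundedContinuousFunction.norm_ofNormedAddCommGroup_le _
      (mul_nonneg (tsum_nonneg fun _ => abs_nonneg _) (norm_nonneg _)) (norm_tsum_weight_le hw f)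

/-- A lazy Markov operator is a nontrivial convex combination of the identity and a contraction. -/
lemma exists_averageOp_eq [TopologicalSpace G] [DiscreteTopology G] (μ : G → ℝ)
    (hpos : ∀ g, 0 ≤ μ g) (hsum : HasSum μ 1) (hlazy : 0 < μ 1) (hμ : Summable fun g => |μ g|) :
    ∃ (p q : ℝ) (S : (G →ᵇ ℝ) →L[ℝ] (G →ᵇ ℝ)), 0 < p ∧ 0 < q ∧ p + q = 1 ∧ ‖S‖ ≤ 1 ∧
      averageOp μ hμ = p • 1 + q • S := by
  classical
  have hle : μ 1 ≤ 1 := le_hasSum hsum 1 fun g _ => hpos g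
  -- Half of the mass at the identity keeps `q` positive even when `μ` is the point mass there.
  set p := μ 1 / 2 with hp
  have hp0 : 0 < p := by positivity
  have hq0 : 0 < 1 - p := by linarith
  set ν : G → ℝ := fun g => (1 - p)⁻¹ * (μ g - Pi.single (M := fun _ => ℝ) 1 p g) with hν
  have hν0 : ∀ g, 0 ≤ ν g := by
    intro g
    refine mul_nonneg (inv_nonneg.2 hq0.le) ?_
    by_cases hg : g = 1
    · subst hg
      simp only [Pi.single_eq_same]
      linarith
    · simp [Pi.single_eq_of_ne hg, hpos g]
  have hνs : HasSum (fun g => |ν g|) 1 := by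
    simp only [abs_of_nonneg (hν0 _)]
    have := (hsum.sub (hasSum_pi_single (1 : G) p)).mul_left (1 - p)⁻¹
    rwa [inv_mul_cancel₀ hq0.ne'] at this
  refine ⟨p, 1 - p, averageOp ν hνs.summable, hp0, hq0, by ring, ?_, ?_⟩
  · exact (norm_averageOp_le ν hνs.summable).trans hνs.tsum_eq.le
  · ext f g
    have h1 := ((summable_weight_mul hνs.summable f g).hasSum).mul_left (1 - p)
    have h2 : HasSum (fun k => Pi.single (M := fun _ => ℝ) 1 p k * f (g * k)) (p * f g) := by
      have := hasSum_single (f := fun k => Pi.single (M := fun _ => ℝ) 1 p k * f (g * k)) 1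
        (fun k hk => by simp [Pi.single_eq_of_ne hk])
      simpa using this
    have h3 : ((p • 1 + (1 - p) • averageOp ν hνs.summable :
        (G →ᵇ ℝ) →L[ℝ] (G →ᵇ ℝ)) f) g = p * f g + (1 - p) * averageOp ν hνs.summable f g := by
      simp
    rw [h3, averageOp_apply, averageOp_apply]
    refine HasSum.tsum_eq ((h2.add h1).congr_fun ?_)
    intro k
    simp only [hν]
    field_simp
    ring

lemma convPowMeas_nonneg (μ : G → ℝ) (hpos : ∀ g, 0 ≤ μ g) (i : ℕ) (g : G) :
    0 ≤ convPowMeas μ i g := by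
  induction i generalizing g with
  | zero => simp only [convPowMeas]; split_ifs <;> norm_num
  | succ i ih => exact tsum_nonneg fun h => mul_nonneg (ih h) (hpos _)

/-- The expectation of `f` at the `i`-th step of the walk is the `i`-th iterate of the Markov
operator at the identity. -/
lemma hasSum_convPowMeas [TopologicalSpace G] [DiscreteTopology G] (μ : G → ℝ)
    (hpos : ∀ g, 0 ≤ μ g) (hμ : Summable fun g => |μ g|) (i : ℕ) (f : G →ᵇ ℝ) :
    HasSum (fun g => convPowMeas μ i g * f g) ((averageOp μ hμ ^ i) f 1) := by
  induction i generalizing f with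
  | zero =>
    have := hasSum_single (f := fun g => convPowMeas μ 0 g * f g) 1
      (fun k hk => by simp [convPowMeas, hk])
    simpa [convPowMeas] using this
  | succ i ih =>
    have hc : Summable (convPowMeas μ i) := by
      simpa using (ih (BoundedContinuousFunction.const G 1)).summable
    -- The sum over pairs `(h, k)` of steps, then reindexed by `g = h * k`.
    have hF : Summable fun x : G × G => convPowMeas μ i x.1 * μ x.2 * f (x.1 * x.2) := by
      have hm : Summable fun x : G × G => convPowMeas μ i x.1 * |μ x.2| :=
        hc.mul_of_nonneg hμ (convPowMeas_nonneg μ hpos i) (fun _ => abs_nonneg _)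
      refine Summable.of_norm_bounded (hm.mul_right ‖f‖) fun x => ?_
      rw [norm_mul, norm_mul, Real.norm_of_nonneg (convPowMeas_nonneg μ hpos i _),
        Real.norm_eq_abs (μ x.2)]
      exact mul_le_mul_of_nonneg_left (f.norm_coe_le_norm _)
        (mul_nonneg (convPowMeas_nonneg μ hpos i _) (abs_nonneg _))
    have hval : ∑' x : G × G, convPowMeas μ i x.1 * μ x.2 * f (x.1 * x.2) =
        (averageOp μ hμ ^ (i + 1)) f 1 := by
      have h1 := hF.hasSum.prod_fiberwise (g := fun h => convPowMeas μ i h * averageOp μ hμ f h)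
        (fun h => by
          have := (summable_weight_mul hμ f h).hasSum.mul_left (convPowMeas μ i h)
          simpa only [averageOp_apply, mul_assoc] using this)
      rw [pow_succ]
      exact h1.unique (ih (averageOp μ hμ f))
    let e : G × G ≃ G × G :=
      { toFun := fun x => (x.2, x.2⁻¹ * x.1)
        invFun := fun x => (x.1 * x.2, x.1)
        left_inv := fun x => by simp
        right_inv := fun x => by simp }
    have hG := (e.hasSum_iff (f := fun x : G × G =>
      convPowMeas μ i x.1 * μ x.2 * f (x.1 * x.2))).2 hF.hasSum
    rw [hval] at hG
    have hfib : ∀ g, Summable fun h => convPowMeas μ i h * μ (h⁻¹ * g) := fun g => by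
      refine Summable.of_norm_bounded (hc.mul_right (∑' k, |μ k|)) fun h => ?_
      rw [norm_mul, Real.norm_of_nonneg (convPowMeas_nonneg μ hpos i _)]
      exact mul_le_mul_of_nonneg_left (hμ.le_tsum (h⁻¹ * g) fun _ _ => abs_nonneg _)
        (convPowMeas_nonneg μ hpos i _)
    refine hG.prod_fiberwise fun g => ?_
    have := (hfib g).hasSum.mul_right (f g)
    simpa [e, Function.comp_def, convPowMeas, convMeas] using this

/-! ### Limit points of slowly varying sequences -/

/-- The limit points of a bounded real sequence whose increments tend to `0` form a nonempty
interval. -/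
lemma isConnected_limitPoints (a : ℕ → ℝ) (C : ℝ) (hC : ∀ n, |a n| ≤ C)
    (hd : Tendsto (fun n => |a n - a (n + 1)|) atTop (𝓝 0)) :
    IsConnected {x : ℝ | ∃ φ : ℕ → ℕ, StrictMono φ ∧ Tendsto (fun k => a (φ k)) atTop (𝓝 x)} := by
  constructor
  · obtain ⟨x, -, φ, hφ, hx⟩ := isCompact_Icc.tendsto_subseq (x := a) (s := Set.Icc (-C) C)
      (fun n => abs_le.1 (hC n))
    exact ⟨x, φ, hφ, hx⟩
  · refine Set.OrdConnected.isPreconnected (Set.ordConnected_of_Ioo ?_)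
    rintro x ⟨φ, hφ, hx⟩ y ⟨ψ, hψ, hy⟩ - z ⟨hxz, hzy⟩
    have hlow : ∀ N, ∃ n ≥ N, a n < z := fun N => by
      obtain ⟨k, h1, h2⟩ := ((hx.eventually_lt_const hxz).and
        (hφ.tendsto_atTop.eventually_ge_atTop N)).exists
      exact ⟨φ k, h2, h1⟩
    have hhigh : ∀ N, ∃ n ≥ N, z < a n := fun N => by
      obtain ⟨k, h1, h2⟩ := ((hy.eventually_const_lt hzy).and
        (hψ.tendsto_atTop.eventually_ge_atTop N)).exists
      exact ⟨ψ k, h2, h1⟩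
    apply MapClusterPt.tendsto_subseq
    rw [Metric.nhds_basis_ball.mapClusterPt_iff_frequently]
    intro ε hε
    rw [frequently_atTop]
    intro N
    obtain ⟨M, hM⟩ := eventually_atTop.1 (hd.eventually_lt_const hε)
    obtain ⟨m, hm, hmz⟩ := hlow (max N M)
    by_contra! hcon
    -- A sequence with small steps that avoids the `ε`-ball around `z` stays below `z`.
    have hstay : ∀ n ≥ m, a n < z := by
      intro n hn
      induction n, hn using Nat.le_induction with
      | base => exact hmz
      | succ n hn ih =>
        by_contra! hge
        have h1 := hM n (le_trans (le_max_right _ _) (le_trans hm hn))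
        have h2 := hcon (n + 1) (le_trans (le_max_left _ _) (le_trans hm (hn.trans n.le_succ)))
        apply h2
        rw [Metric.mem_ball, Real.dist_eq, abs_lt]
        have := abs_lt.1 h1
        constructor <;> linarith [this.1, this.2]
    obtain ⟨n, hn, hnz⟩ := hhigh m
    exact absurd (hstay n hn) (not_lt.2 hnz.le)

end Helpers

/-- For a lazy probability measure μ on a countable group and any subset A,
the set of limit points of the sequence i ↦ μ^{*i}(A) is a connected subset
of ℝ. -/
theorem statement11 {G : Type*} [Group G] [Countable G] (μ : G → ℝ)
    (hpos : ∀ g, 0 ≤ μ g) (hsum : (∑' g : G, μ g) = 1) (hlazy : 0 < μ 1)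
    (A : Set G) :
    IsConnected {x : ℝ | ∃ φ : ℕ → ℕ, StrictMono φ ∧
      Tendsto (fun k : ℕ => measSet (convPowMeas μ (φ k)) A) atTop (𝓝 x)} := by
  classical
  let _ : TopologicalSpace G := ⊥
  have _ : DiscreteTopology G := ⟨rfl⟩
  -- The junk value of a divergent sum is `0`, so the sum `1` forces convergence.
  have hS : Summable μ := by
    by_contra h
    rw [tsum_eq_zero_of_not_summable h] at hsum
    exact zero_ne_one hsum
  have hμ1 : HasSum μ 1 := hsum ▸ hS.hasSum
  have hμ : Summable fun g => |μ g| := by simpa only [abs_of_nonneg (hpos _)] using hS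
  obtain ⟨p, q, S, hp, hq, hpq, hSn, hP⟩ := exists_averageOp_eq μ hpos hμ1 hlazy hμ
  have hind : ∀ g, ‖A.indicator (fun _ => (1 : ℝ)) g‖ ≤ 1 := fun g => by
    by_cases hg : g ∈ A <;> simp [hg]
  let f : BoundedContinuousFunction G ℝ := BoundedContinuousFunction.ofNormedAddCommGroup
    (A.indicator fun _ => (1 : ℝ)) continuous_of_discreteTopology 1 hind
  have hf : ‖f‖ ≤ 1 := BoundedContinuousFunction.norm_ofNormedAddCommGroup_le _ zero_le_one hind
  have ha : ∀ i, measSet (convPowMeas μ i) A = (averageOp μ hμ ^ i) f 1 := fun i => by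
    rw [measSet, tsum_subtype, ← (hasSum_convPowMeas μ hpos hμ i f).tsum_eq]
    refine tsum_congr fun g => ?_
    by_cases hg : g ∈ A <;> simp [f, hg]
  have heval : ∀ T : BoundedContinuousFunction G ℝ →L[ℝ] BoundedContinuousFunction G ℝ,
      |T f 1| ≤ ‖T‖ := fun T =>
    ((T f).norm_coe_le_norm 1).trans ((T.le_opNorm f).trans
      (mul_le_of_le_one_right (norm_nonneg _) hf))
  -- The algebra of operators has a unit of norm one because the space is nontrivial.
  have _ : Nontrivial (BoundedContinuousFunction G ℝ) :=
    ⟨0, BoundedContinuousFunction.const G 1, fun h => by simpa using DFunLike.congr_fun h 1⟩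
  have hPn : ‖averageOp μ hμ‖ ≤ 1 := (norm_averageOp_le μ hμ).trans
    (by simp only [abs_of_nonneg (hpos _), hsum, le_refl])
  refine isConnected_limitPoints (fun i => measSet (convPowMeas μ i) A) 1 (fun i => ?_) ?_
  · rw [ha]
    exact (heval _).trans ((norm_pow_le (averageOp μ hμ) i).trans (pow_le_one₀ (norm_nonneg (averageOp μ hμ)) hPn))
  · refine squeeze_zero (fun _ => abs_nonneg _) (fun i => ?_)
      (tendsto_norm_pow_sub S hSn p q hp hq hpq)
    rw [ha, ha, ← hP]
    exact heval (averageOp μ hμ ^ i - averageOp μ hμ ^ (i + 1))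
end

section
/- Let G be a finitely generated, infinite, virtually solvable group. Then there exist subsets M, N ⊆ G with M finite and N infinite such that G = MN := {mn : m ∈ M, n ∈ N} and every element of N has infinite order in G. -/
open Pointwise

/-!
Call a set `S` of elements of `G` *left syndetic* if finitely many left translates of `S` cover `G`.
The claim is that the elements of infinite order form such a set.

In the derived series of a solvable finite-index subgroup, let `K` be the last term of finite index.
By Schreier's lemma `K` is finitely generated, and its abelianization is infinite, so the
abelianization is not torsion: it has an element of infinite order, the image of some `t : K`
(`exists_finiteIndex_infinite_abelianization`,
`exists_translate_of_infinite_abelianization`). If `k : K` has torsion image in the abelianization,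
then `t * k` has an image of infinite order; hence one of `k`, `t * k` has infinite order, and the
translates by `1` and `t⁻¹` suffice for `K`. Finitely many cosets of `K` cover `G`, which gives the
result for `G`. The set of elements of infinite order is then infinite because `G` is.
-/

/-- The last term of the derived series having finite index has infinite abelianization, since
otherwise the next term would have finite index too. -/
lemma exists_finiteIndex_infinite_abelianization {H : Type*} [Group H] [Infinite H]
    [Group.IsSolvable H] : ∃ K : Subgroup H, K.FiniteIndex ∧ Infinite (Abelianization K) := by
  by_contra! hcon
  have key : ∀ n, (derivedSeries H n).FiniteIndex := by
    intro n
    induction n with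
    | zero => rw [derivedSeries_zero]; infer_instance
    | succ n ih =>
      have hfin : Finite (Abelianization (derivedSeries H n)) := hcon _ ih
      have hidx : (commutator (derivedSeries H n)).FiniteIndex :=
        @Subgroup.finiteIndex_of_finite_quotient _ _ _ hfin
      rw [derivedSeries_succ, ← Subgroup.map_subtype_commutator]
      constructor
      rw [Subgroup.index_map_subtype]
      exact mul_ne_zero hidx.index_ne_zero ih.index_ne_zero
  obtain ⟨n, hn⟩ := (Group.isSolvable_def H).mp inferInstance
  have hbot := (key n).index_ne_zero
  rw [hn, Subgroup.index_bot] at hbot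
  exact hbot Nat.card_eq_zero_of_infinite

lemma exists_translate_of_infinite_abelianization {K : Type*} [Group K] [Group.FG K]
    [Infinite (Abelianization K)] :
    ∃ t : K, ∀ k : K, ¬ IsOfFinOrder k ∨ ¬ IsOfFinOrder (t * k) := by
  have hfg : Group.FG (Abelianization K) :=
    Group.fg_of_surjective (f := Abelianization.of) QuotientGroup.mk_surjective
  have hnt : ∃ a : Abelianization K, ¬ IsOfFinOrder a := by
    by_contra! h
    have := CommGroup.finite_of_fg_isMulTorsion (Abelianization K) h
    exact not_finite (Abelianization K)
  obtain ⟨a, ha⟩ := hnt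
  obtain ⟨t, rfl⟩ : ∃ t, Abelianization.of t = a := QuotientGroup.mk_surjective a
  refine ⟨t, fun k => ?_⟩
  by_contra! h
  have h1 := Abelianization.of.isOfFinOrder h.1
  have h2 := Abelianization.of.isOfFinOrder h.2
  apply ha
  have h3 := (Commute.all _ _).isOfFinOrder_mul h2 h1.inv
  simpa using h3

/-- If `K` is covered by the translates by `1` and `t⁻¹` of its elements of infinite order, then
combining these translates with coset representatives of `K` covers `G`. -/
lemma exists_finite_of_translate {G : Type*} [Group G] (K : Subgroup G) [K.FiniteIndex] (t : K)
    (ht : ∀ k : K, ¬ IsOfFinOrder k ∨ ¬ IsOfFinOrder (t * k)) :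
    ∃ M : Set G, M.Finite ∧ M * {g : G | ¬ IsOfFinOrder g} = Set.univ := by
  have hfin : Finite (G ⧸ K) := inferInstance
  refine ⟨Set.range (Quotient.out : G ⧸ K → G) * {1, (t : G)⁻¹},
    (@Set.finite_range _ (G ⧸ K) Quotient.out hfin).mul (Set.toFinite _), Set.eq_univ_of_forall fun g => ?_⟩
  have hk : (g : G ⧸ K).out⁻¹ * g ∈ K := QuotientGroup.eq.mp (QuotientGroup.out_eq' _)
  rcases ht ⟨_, hk⟩ with h | h
  · refine ⟨_, ⟨_, ⟨(g : G ⧸ K), rfl⟩, 1, by simp, rfl⟩, (g : G ⧸ K).out⁻¹ * g, ?_, by simp⟩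
    exact fun h' => h (K.subtype_injective.isOfFinOrder_iff.mp h')
  · refine ⟨_, ⟨_, ⟨(g : G ⧸ K), rfl⟩, (t : G)⁻¹, by simp, rfl⟩,
      t * ((g : G ⧸ K).out⁻¹ * g), ?_, by simp [mul_assoc]⟩
    exact fun h' => h (K.subtype_injective.isOfFinOrder_iff.mp h')

theorem statement14 {G : Type*} [Group G] [Group.FG G] [Infinite G]
    (hvsolv : ∃ H : Subgroup G, IsSolvable ↥H ∧ H.FiniteIndex) :
    ∃ M N : Set G, M.Finite ∧ N.Infinite ∧ M * N = Set.univ ∧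
      ∀ g ∈ N, ¬ IsOfFinOrder g := by
  obtain ⟨H, (hsolv : Group.IsSolvable H), hH⟩ := hvsolv
  have hHinf : Infinite H := by
    by_contra hfin
    rw [not_infinite_iff_finite] at hfin
    have hcard := H.card_mul_index
    rw [Nat.card_eq_zero_of_infinite (α := G)] at hcard
    exact mul_ne_zero Nat.card_pos.ne' hH.index_ne_zero hcard
  obtain ⟨L, hL, hLinf⟩ := exists_finiteIndex_infinite_abelianization (H := H)
  have hHfg : Group.FG H := Subgroup.fg_of_index_ne_zero H
  have hLfg : Group.FG L := Subgroup.fg_of_index_ne_zero L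
  obtain ⟨t, ht⟩ := exists_translate_of_infinite_abelianization (K := L)
  have hK : (L.map H.subtype).FiniteIndex := by
    constructor
    rw [Subgroup.index_map_subtype]
    exact mul_ne_zero hL.index_ne_zero hH.index_ne_zero
  let e : L ≃* L.map H.subtype := L.equivMapOfInjective H.subtype H.subtype_injective
  obtain ⟨M, hM, hMN⟩ := exists_finite_of_translate (L.map H.subtype) (e t) (fun k => by
    obtain ⟨l, rfl⟩ := e.surjective k
    have he (x : L) : IsOfFinOrder (e x) ↔ IsOfFinOrder x :=
      Function.Injective.isOfFinOrder_iff (f := e.toMonoidHom) e.injective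
    rw [← map_mul, he, he]
    exact ht l)
  refine ⟨M, _, hM, fun hN => ?_, hMN, fun g hg => hg⟩
  have hfin := hM.mul hN
  rw [hMN] at hfin
  exact Set.infinite_univ hfin
end

section
/- Let G be a finitely generated, infinite, virtually solvable group and let S be a finite symmetric generating set of G. Then limsup_{R→∞} Pr_{U_S(R)}(g has finite order) < 1. -/
/-! The proof rests on a covering principle. Write `T` for the set of elements of finite order.
If there is a finite set `F` such that every translate `g F` contains an element outside `T`, and
`F` lies in the ball of radius `r`, then `g ↦ g f(g)` maps the ball of radius `n` into the
non-torsion part of the ball of radius `n + r`, with fibres of size at most `|F|`; since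
`|B(n + r)| ≤ |B(n)| |B(r)|`, a proportion of at least `1 / (|F| |B(r)|)` of every large ball is
non-torsion.

To find `F`, take a finite-index subgroup `K` and `k ∈ K` whose class in the abelianization of `K`
has infinite order. If `h ∈ K`, then `h` and `h k` cannot both be torsion, because torsion elements
of an abelian group form a subgroup. So `F = R ∪ R k` works, where `R` moves every element into `K`.

Such a `K` occurs in the derived series of a solvable finite-index subgroup: if every term had
torsion abelianization, then these would be finite, being finitely generated, so inductively every
term would have finite index in `G`, including the trivial one. -/

open Filter Topology Pointwise

/-- The ball of radius `R` in the Cayley graph of `G` with respect to the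
finite generating set `S`. -/
def cayleyBall {G : Type*} [Group G] (S : Finset G) (R : ℕ) : Set G :=
  {g | ∃ l : List G, l.length ≤ R ∧ (∀ x ∈ l, x ∈ S) ∧ l.prod = g}

/-- The probability of the predicate `P` under the uniform measure on the
ball of radius `R`. -/
noncomputable def cayleyProb {G : Type*} [Group G] (S : Finset G) (R : ℕ)
    (P : G → Prop) : ℝ :=
  (Set.ncard {g ∈ cayleyBall S R | P g} : ℝ) / (Set.ncard (cayleyBall S R) : ℝ)

/-- A finite-index subgroup with torsion abelianization has a finite-index commutator subgroup. -/
lemma finiteIndex_commutator_of_torsion {G : Type*} [Group G] [Group.FG G] (K : Subgroup G)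
    [K.FiniteIndex] (ht : ∀ k : K, IsOfFinOrder (Abelianization.of k)) :
    (⁅K, K⁆ : Subgroup G).FiniteIndex := by
  have hsurj : Function.Surjective (Abelianization.of (G := K)) := Quot.mk_surjective
  have hfg : Group.FG (Abelianization K) := Group.fg_of_surjective hsurj
  have hfin : Finite (Abelianization K) := CommGroup.finite_of_fg_isMulTorsion _ (by
    intro x
    obtain ⟨k, rfl⟩ := hsurj x
    exact ht k)
  have hker : (commutator K).FiniteIndex := by
    rw [← Abelianization.ker_of]
    infer_instance
  rw [← Subgroup.map_subtype_commutator, Subgroup.finiteIndex_iff, Subgroup.index_map_subtype]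
  exact mul_ne_zero hker.index_ne_zero Subgroup.FiniteIndex.index_ne_zero

/-- An infinite finitely generated virtually solvable group virtually has an element of infinite
order in the abelianization. -/
lemma exists_finiteIndex_infinite_order {G : Type*} [Group G] [Group.FG G] [Infinite G]
    (hvsolv : ∃ H : Subgroup G, Group.IsSolvable ↥H ∧ H.FiniteIndex) :
    ∃ K : Subgroup G, K.FiniteIndex ∧ ∃ k : K, ¬ IsOfFinOrder (Abelianization.of k) := by
  obtain ⟨H, ⟨n, hn⟩, hH⟩ := hvsolv
  by_contra! hcon
  have key : ∀ m, ((derivedSeries H m).map H.subtype).FiniteIndex := by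
    intro m
    induction m with
    | zero => simpa [← MonoidHom.range_eq_map] using hH
    | succ m ih =>
      rw [derivedSeries_succ, Subgroup.map_commutator]
      exact finiteIndex_commutator_of_torsion _ (hcon _ ih)
  have hbot := key n
  rw [hn, Subgroup.map_bot, Subgroup.finiteIndex_iff, Subgroup.index_bot] at hbot
  exact hbot Nat.card_eq_zero_of_infinite

/-- Some finite set `F` has the property that every translate `g F` contains an element of infinite
order: coset representatives of `K`, together with their products with `k`. -/
lemma exists_finset_mul_not_isOfFinOrder {G : Type*} [Group G] (K : Subgroup G)
    [K.FiniteIndex] (k : K) (hk : ¬ IsOfFinOrder (Abelianization.of k)) :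
    ∃ F : Finset G, ∀ g : G, ∃ f ∈ F, ¬ IsOfFinOrder (g * f) := by
  classical
  have hfin : Fintype (G ⧸ K) := Fintype.ofFinite _
  let R : Finset G := Finset.univ.image (fun q : G ⧸ K => q.out)
  refine ⟨R ∪ R.image (· * (k : G)), fun g => ?_⟩
  -- `G ⧸ K` consists of left cosets, so the representative bringing `g` into `K` is that of `g⁻¹`.
  obtain ⟨h, hh⟩ := QuotientGroup.mk_out_eq_mul K g⁻¹
  have hR : ((g⁻¹ : G) : G ⧸ K).out ∈ R := Finset.mem_image_of_mem _ (Finset.mem_univ _)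
  rw [hh] at hR
  by_cases h1 : IsOfFinOrder h
  · refine ⟨g⁻¹ * h * k, Finset.mem_union_right _ (Finset.mem_image_of_mem _ hR), fun h2 => hk ?_⟩
    have h3 : IsOfFinOrder (h * k) := by
      refine (Submonoid.isOfFinOrder_coe (H := K.toSubmonoid)).1 ?_
      simpa [mul_assoc] using h2
    have h4 := (Abelianization.of.isOfFinOrder h1).inv.mul (Abelianization.of.isOfFinOrder h3)
    simpa using h4
  · refine ⟨g⁻¹ * h, Finset.mem_union_left _ hR, fun h2 => h1 ?_⟩
    refine (Submonoid.isOfFinOrder_coe (H := K.toSubmonoid)).1 ?_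
    simpa using h2

lemma cayleyBall_finite {G : Type*} [Group G] (S : Finset G) (R : ℕ) :
    (cayleyBall S R).Finite := by
  have h : (cayleyBall S R) ⊆
      (fun l : List S => (l.map Subtype.val).prod) '' {l | l.length ≤ R} := by
    rintro g ⟨l, hl, hS, rfl⟩
    lift l to List S using hS
    exact ⟨l, by simpa using hl, rfl⟩
  exact ((List.finite_length_le S R).image _).subset h

lemma one_mem_cayleyBall {G : Type*} [Group G] (S : Finset G) (R : ℕ) :
    (1 : G) ∈ cayleyBall S R := ⟨[], by simp, by simp, rfl⟩

lemma cayleyBall_mono {G : Type*} [Group G] (S : Finset G) {m n : ℕ} (h : m ≤ n) :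
    cayleyBall S m ⊆ cayleyBall S n := by
  rintro g ⟨l, hl, hS, rfl⟩
  exact ⟨l, hl.trans h, hS, rfl⟩

lemma cayleyBall_add {G : Type*} [Group G] (S : Finset G) (m n : ℕ) :
    cayleyBall S (m + n) = cayleyBall S m * cayleyBall S n := by
  ext g
  constructor
  · rintro ⟨l, hl, hS, rfl⟩
    refine ⟨_, ⟨l.take m, by simp, fun x hx => hS x (List.mem_of_mem_take hx), rfl⟩,
      _, ⟨l.drop m, by simp; omega, fun x hx => hS x (List.mem_of_mem_drop hx), rfl⟩, ?_⟩
    exact List.prod_take_mul_prod_drop l m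
  · rintro ⟨_, ⟨l, hl, hS, rfl⟩, _, ⟨l', hl', hS', rfl⟩, rfl⟩
    refine ⟨l ++ l', by simp; omega, fun x hx => ?_, by simp⟩
    rcases List.mem_append.1 hx with h | h
    exacts [hS x h, hS' x h]

lemma exists_mem_cayleyBall {G : Type*} [Group G] (S : Finset G) (hsymm : ∀ g ∈ S, g⁻¹ ∈ S)
    (hgen : Subgroup.closure (S : Set G) = ⊤) (g : G) : ∃ R, g ∈ cayleyBall S R := by
  have hg : g ∈ Subgroup.closure (S : Set G) := hgen ▸ Subgroup.mem_top g
  rw [← Subgroup.mem_toSubmonoid, Subgroup.closure_toSubmonoid, Set.union_eq_left.2] at hg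
  · obtain ⟨l, hl, rfl⟩ := Submonoid.exists_list_of_mem_closure hg
    exact ⟨l.length, l, le_rfl, hl, rfl⟩
  · intro x hx
    simpa using hsymm _ hx

lemma exists_finset_subset_cayleyBall {G : Type*} [Group G] (S : Finset G)
    (hsymm : ∀ g ∈ S, g⁻¹ ∈ S) (hgen : Subgroup.closure (S : Set G) = ⊤) (F : Finset G) :
    ∃ r, ∀ f ∈ F, f ∈ cayleyBall S r := by
  choose ρ hρ using exists_mem_cayleyBall S hsymm hgen
  exact ⟨F.sup ρ, fun f hf => cayleyBall_mono S (Finset.le_sup hf) (hρ f)⟩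

/-- The covering principle: if every `g F` meets the complement of `P`, then `Pᶜ` occupies at least
the proportion `1 / (|F| |B(r)|)` of balls of radius at least `r`. -/
lemma cayleyBall_card_le {G : Type*} [Group G] (S : Finset G) (P : G → Prop) (F : Finset G)
    (hF : ∀ g : G, ∃ f ∈ F, ¬ P (g * f)) (r : ℕ) (hr : ∀ f ∈ F, f ∈ cayleyBall S r) (n : ℕ) :
    (cayleyBall S (n + r)).ncard ≤
      {g ∈ cayleyBall S (n + r) | ¬ P g}.ncard * F.card * (cayleyBall S r).ncard := by
  have hsub : cayleyBall S n ⊆ {g ∈ cayleyBall S (n + r) | ¬ P g} * (F : Set G)⁻¹ := by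
    intro g hg
    obtain ⟨f, hf, hfP⟩ := hF g
    refine ⟨g * f, ⟨?_, hfP⟩, f⁻¹, by simpa using hf, by simp⟩
    rw [cayleyBall_add]
    exact Set.mul_mem_mul hg (hr f hf)
  have hNT : {g ∈ cayleyBall S (n + r) | ¬ P g}.Finite :=
    (cayleyBall_finite S _).subset (Set.sep_subset _ _)
  calc (cayleyBall S (n + r)).ncard
      ≤ (cayleyBall S n).ncard * (cayleyBall S r).ncard := by
        rw [cayleyBall_add]
        exact Set.natCard_mul_le
    _ ≤ _ := by
        gcongr
        calc _ ≤ _ := Set.ncard_le_ncard hsub (hNT.mul F.finite_toSet.inv)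
          _ ≤ _ := Set.natCard_mul_le
          _ = _ := by
            rw [Set.natCard_inv]
            simp [Set.ncard]

theorem statement15 {G : Type*} [Group G] [Group.FG G] [Infinite G]
    (hvsolv : ∃ H : Subgroup G, IsSolvable ↥H ∧ H.FiniteIndex)
    (S : Finset G) (hsymm : ∀ g ∈ S, g⁻¹ ∈ S)
    (hgen : Subgroup.closure (S : Set G) = ⊤) :
    limsup (fun R : ℕ => cayleyProb S R (fun g => IsOfFinOrder g)) atTop < 1 := by
  classical
  obtain ⟨K, hK, k, hk⟩ := exists_finiteIndex_infinite_order hvsolv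
  obtain ⟨F, hF⟩ := exists_finset_mul_not_isOfFinOrder K k hk
  obtain ⟨r, hr⟩ := exists_finset_subset_cayleyBall S hsymm hgen F
  set C : ℕ := F.card * (cayleyBall S r).ncard with hC
  have hball : ∀ n, 0 < (cayleyBall S n).ncard := fun n =>
    (Set.ncard_pos (cayleyBall_finite S n)).2 ⟨1, one_mem_cayleyBall S n⟩
  have hCpos : 0 < C := by
    obtain ⟨f, hf, -⟩ := hF 1
    exact Nat.mul_pos (Finset.card_pos.2 ⟨f, hf⟩) (hball r)
  have hCpos' : (0 : ℝ) < C := by exact_mod_cast hCpos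
  have hle : limsup (fun R : ℕ => cayleyProb S R (fun g => IsOfFinOrder g)) atTop ≤
      1 - 1 / (C : ℝ) := by
    refine limsup_le_of_le ?_ ?_
    · refine IsCoboundedUnder.of_frequently_ge (a := 0) (Eventually.frequently ?_)
      exact Eventually.of_forall fun R => div_nonneg (Nat.cast_nonneg _) (Nat.cast_nonneg _)
    · filter_upwards [eventually_ge_atTop r] with R hR
      obtain ⟨n, rfl⟩ := Nat.exists_eq_add_of_le' hR
      have h1 := cayleyBall_card_le S _ F hF r hr n
      rw [mul_assoc, ← hC] at h1
      have h2 : {g ∈ cayleyBall S (n + r) | IsOfFinOrder g}.ncard +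
          {g ∈ cayleyBall S (n + r) | ¬ IsOfFinOrder g}.ncard = (cayleyBall S (n + r)).ncard :=
        Set.ncard_inter_add_ncard_sdiff_eq_ncard _ _ (cayleyBall_finite S _)
      have h1' : ((cayleyBall S (n + r)).ncard : ℝ) ≤
          {g ∈ cayleyBall S (n + r) | ¬ IsOfFinOrder g}.ncard * C := by exact_mod_cast h1
      have h2' : ({g ∈ cayleyBall S (n + r) | IsOfFinOrder g}.ncard : ℝ) +
          {g ∈ cayleyBall S (n + r) | ¬ IsOfFinOrder g}.ncard = (cayleyBall S (n + r)).ncard := by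
        exact_mod_cast h2
      have hb : (0 : ℝ) < (cayleyBall S (n + r)).ncard := by exact_mod_cast hball _
      have h3 := (div_le_iff₀ hCpos').2 h1'
      rw [cayleyProb, div_le_iff₀ hb, sub_mul, one_mul, div_mul_eq_mul_div, one_mul]
      linarith
  have : 0 < 1 / (C : ℝ) := by positivity
  linarith
end
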